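/- There is a constant C such that for every prime p > 3 and every integer j with 1 ≤ j ≤ p − 1 whose residue generates (ℤ/pℤ)ˣ, each element of SL(2, F_p) can be written as a product of at most C·(1 + log₂ p) factors, each factor being one of the matrices u = [[1,1],[0,1]], h₂ = [[2⁻¹,0],[0,2]], h = [[j⁻¹,0],[0,j]], t = [[0,1],[−1,0]] (entries in F_p) or the inverse of one of these. -/

import Mathlib

/-!
Conjugation by `h₂` raises `u` to the fourth power, so expanding an exponent in base 4 (Horner's
scheme) writes each power of `u` in `O(log p)` letters; these powers are all the upper unitriangular
matrices, and `t` conjugates them into the lower unitriangular ones. Every element of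
`SL(2, ZMod p)` is a product of four unitriangular matrices: one makes the lower left entry a unit,
and three more factor the result. Such a row operation exists over any commutative ring with
finitely many maximal ideals, so the argument works modulo every odd number.
-/

section Words

open Pointwise

theorem exists_list_of_mem_insert_one_pow {M : Type*} [Monoid M] {S : Set M} {n : ℕ} {g : M}
    (hg : g ∈ insert 1 S ^ n) : ∃ l : List M, (∀ x ∈ l, x ∈ S) ∧ l.prod = g ∧ l.length ≤ n := by
  induction n generalizing g with
  | zero => exact ⟨[], by simp, by simpa [eq_comm] using hg, by simp⟩
  | succ n ih =>
    rw [pow_succ'] at hg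
    obtain ⟨s, hs, h, hh, rfl⟩ := hg
    obtain ⟨l, hlS, rfl, hln⟩ := ih hh
    obtain rfl | hs := hs
    · exact ⟨l, hlS, (one_mul _).symm, by omega⟩
    · exact ⟨s :: l, by simpa using ⟨hs, hlS⟩, List.prod_cons, by simpa using hln⟩

-- Exponential distortion of `⟨v⟩` in the Baumslag–Solitar group `BS(1, q)`: Horner's scheme
-- `v ^ b = (d⁻¹ * v ^ (b / q) * d) * v ^ (b % q)` spends at most `q + 1` letters per digit.
theorem pow_mem_pow_of_conj_eq_pow {G : Type*} [Group G] {B : Set G} {v d : G} {q : ℕ}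
    (h1 : 1 ∈ B) (hv : v ∈ B) (hd : d ∈ B) (hd' : d⁻¹ ∈ B) (hconj : d⁻¹ * v * d = v ^ q)
    {k b : ℕ} (hb : b < q ^ k) : v ^ b ∈ B ^ ((q + 1) * k) := by
  induction k generalizing b with
  | zero => simp_all
  | succ k ih =>
    have hq : 0 < q := by
      by_contra! hq
      simp_all
    have hdigit : b % q < q := Nat.mod_lt b hq
    have hquot : v ^ (b / q) ∈ B ^ ((q + 1) * k) :=
      ih (Nat.div_lt_of_lt_mul (by rwa [← pow_succ']))
    have hhorner : v ^ b = d⁻¹ * v ^ (b / q) * d * v ^ (b % q) := by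
      have hconj_pow : d⁻¹ * v ^ (b / q) * d = (v ^ q) ^ (b / q) := by
        rw [← hconj]
        simpa using (conj_pow (a := d⁻¹) (b := v) (i := b / q)).symm
      rw [hconj_pow, ← pow_mul, ← pow_add, Nat.div_add_mod]
    have hmem : v ^ b ∈ B ^ (1 + (q + 1) * k + 1 + b % q) := by
      simp only [hhorner, pow_add, pow_one]
      exact Set.mul_mem_mul (Set.mul_mem_mul (Set.mul_mem_mul hd' hquot) hd) (Set.pow_mem_pow hv)
    exact Set.pow_subset_pow_right h1 (by rw [mul_add]; omega) hmem

end Words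

-- Commutative semilocal rings have stable range one: solve for `y` modulo each maximal ideal.
theorem exists_isUnit_add_mul_of_isCoprime {R : Type*} [CommRing R] [Finite (MaximalSpectrum R)]
    {a b : R} (hab : IsCoprime a b) : ∃ y, IsUnit (a + y * b) := by
  classical
  have hcoprime : Pairwise (Function.onFun IsCoprime (MaximalSpectrum.asIdeal (R := R))) :=
    fun _ _ hne ↦ Ideal.isCoprime_of_isMaximal (MaximalSpectrum.ext_iff.ne.mp hne)
  obtain ⟨y, hy⟩ := Ideal.exists_forall_sub_mem_ideal hcoprime
    fun m ↦ if a ∈ m.asIdeal then 1 else 0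
  refine ⟨y, by_contra fun hunit ↦ ?_⟩
  obtain ⟨m, hm, hmem⟩ := exists_max_ideal_of_mem_nonunits hunit
  have hym := hy ⟨m, hm⟩
  by_cases ha : a ∈ m
  · have hb : b ∈ m := by
      rw [if_pos ha] at hym
      have hyb : y * b ∈ m := (m.add_mem_iff_right ha).mp hmem
      simpa [sub_mul] using m.sub_mem hyb (m.mul_mem_right b hym)
    obtain ⟨r, s, hrs⟩ := hab
    exact hm.ne_top ((Ideal.eq_top_iff_one m).mpr
      (hrs ▸ m.add_mem (m.mul_mem_left r ha) (m.mul_mem_left s hb)))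
  · rw [if_neg ha, sub_zero] at hym
    exact ha ((m.add_mem_iff_left (m.mul_mem_right b hym)).mp hmem)

section SpecialLinearGroup

open Matrix.SpecialLinearGroup
open scoped MatrixGroups Pointwise

theorem transvection_pow {ι R : Type*} [DecidableEq ι] [Fintype ι] [CommRing R] {i j : ι}
    (hij : i ≠ j) (b : R) (k : ℕ) : transvection hij b ^ k = transvection hij (k • b) := by
  induction k with
  | zero => simp
  | succ k ih => rw [pow_succ, ih, ← transvection_add, succ_nsmul]

local notation "E₁₂" => transvection (zero_ne_one (α := Fin 2))
local notation "E₂₁" => transvection (one_ne_zero (α := Fin 2))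

variable {R : Type*} [CommRing R]

theorem coe_transvection_zero_one (x : R) :
    (E₁₂ x : Matrix (Fin 2) (Fin 2) R) = !![1, x; 0, 1] := by
  ext i j
  fin_cases i <;> fin_cases j <;> simp [transvection_coe]

theorem coe_transvection_one_zero (x : R) :
    (E₂₁ x : Matrix (Fin 2) (Fin 2) R) = !![1, 0; x, 1] := by
  ext i j
  fin_cases i <;> fin_cases j <;> simp [transvection_coe]

/-- The element `diag(a⁻¹, a)` of the diagonal torus; its inverse scales `E₁₂` by `a ^ 2`. -/
def invDiag (a : Rˣ) : SL(2, R) := ⟨!![↑a⁻¹, 0; 0, ↑a], by simp⟩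

theorem coe_invDiag (a : Rˣ) :
    (invDiag a : Matrix (Fin 2) (Fin 2) R) = !![↑a⁻¹, 0; 0, ↑a] := rfl

/-- The Weyl element, with the sign for which `weyl⁻¹ * E₁₂ x * weyl = E₂₁ (-x)`. -/
def weyl : SL(2, R) := ⟨!![0, 1; -1, 0], by simp⟩

theorem coe_weyl : ((weyl : SL(2, R)) : Matrix (Fin 2) (Fin 2) R) = !![0, 1; -1, 0] := rfl

theorem invDiag_inv_mul_transvection_mul (a : Rˣ) (x : R) :
    (invDiag a)⁻¹ * E₁₂ x * invDiag a = E₁₂ (a ^ 2 * x) := by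
  ext i j
  fin_cases i <;> fin_cases j <;>
    simp [coe_transvection_zero_one, coe_invDiag, Matrix.mul_apply, Matrix.adjugate_fin_two, sq,
      mul_right_comm]

theorem weyl_inv_mul_transvection_mul (x : R) : weyl⁻¹ * E₁₂ x * weyl = E₂₁ (-x) := by
  ext i j
  fin_cases i <;> fin_cases j <;>
    simp [coe_transvection_zero_one, coe_transvection_one_zero, coe_weyl, Matrix.mul_apply,
      Matrix.adjugate_fin_two]

theorem coe_transvection_mul_transvection_mul_transvection (x y z : R) :
    (E₁₂ x * E₂₁ y * E₁₂ z : SL(2, R)) =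
      (!![1 + x * y, (1 + x * y) * z + x; y, y * z + 1] : Matrix (Fin 2) (Fin 2) R) := by
  simp [coe_transvection_zero_one, coe_transvection_one_zero]

theorem exists_eq_transvection_mul_of_isUnit {g : SL(2, R)} (hg : IsUnit (g 1 0)) :
    ∃ x z, g = E₁₂ x * E₂₁ (g 1 0) * E₁₂ z := by
  have hdet : g 0 0 * g 1 1 - g 0 1 * g 1 0 = 1 := by rw [← Matrix.det_fin_two, g.det_coe]
  obtain ⟨s, hs⟩ := hg.exists_right_inv
  obtain ⟨x, hx⟩ : ∃ x, g 0 0 = 1 + x * g 1 0 :=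
    ⟨(g 0 0 - 1) * s, by linear_combination (1 - g 0 0) * hs⟩
  obtain ⟨z, hz⟩ : ∃ z, g 1 1 = g 1 0 * z + 1 :=
    ⟨(g 1 1 - 1) * s, by linear_combination (1 - g 1 1) * hs⟩
  have hxz : g 0 1 = g 0 0 * z + x :=
    hg.mul_right_cancel (by linear_combination g 0 0 * hz + hx - hdet)
  refine ⟨x, z, Subtype.ext ?_⟩
  rw [coe_transvection_mul_transvection_mul_transvection, ← hx, ← hxz, ← hz]
  exact Matrix.eta_fin_two _

theorem exists_eq_transvection_mul [Finite (MaximalSpectrum R)] (g : SL(2, R)) :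
    ∃ v x y z, g = E₂₁ v * E₁₂ x * E₂₁ y * E₁₂ z := by
  obtain ⟨v, hv⟩ := exists_isUnit_add_mul_of_isCoprime (g.isCoprime_col 0).symm
  have hrow : (E₂₁ v * g) 1 0 = g 1 0 + v * g 0 0 := by
    simp [coe_transvection_one_zero, Matrix.mul_apply, add_comm]
  obtain ⟨x, z, hxz⟩ := exists_eq_transvection_mul_of_isUnit (hrow ▸ hv)
  refine ⟨-v, x, (E₂₁ v * g) 1 0, z, ?_⟩
  rw [← transvection_inv, mul_assoc, mul_assoc, ← mul_assoc (E₁₂ x), ← hxz, inv_mul_cancel_left]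

theorem mem_pow_of_transvection_mem_pow [Finite (MaximalSpectrum R)] {B : Set SL(2, R)} {N : ℕ}
    (hw : weyl ∈ B) (hw' : weyl⁻¹ ∈ B) (hE : ∀ x, E₁₂ x ∈ B ^ N) (g : SL(2, R)) :
    g ∈ B ^ (4 * N + 4) := by
  have hlower (x : R) : E₂₁ x ∈ B ^ (1 + N + 1) := by
    rw [← neg_neg x, ← weyl_inv_mul_transvection_mul]
    simp only [pow_add, pow_one]
    exact Set.mul_mem_mul (Set.mul_mem_mul hw' (hE _)) hw
  obtain ⟨v, x, y, z, rfl⟩ := exists_eq_transvection_mul g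
  rw [show 4 * N + 4 = (1 + N + 1) + N + (1 + N + 1) + N by ring, pow_add, pow_add, pow_add]
  exact Set.mul_mem_mul (Set.mul_mem_mul (Set.mul_mem_mul (hlower v) (hE x)) (hlower y)) (hE z)

theorem transvection_mem_pow {n : ℕ} [NeZero n] {B : Set SL(2, ZMod n)} {a : (ZMod n)ˣ} {q k : ℕ}
    (ha : (a : ZMod n) ^ 2 = q) (hn : n ≤ q ^ k) (h1 : 1 ∈ B) (hu : E₁₂ 1 ∈ B)
    (hd : invDiag a ∈ B) (hd' : (invDiag a)⁻¹ ∈ B) (x : ZMod n) : E₁₂ x ∈ B ^ ((q + 1) * k) := by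
  have hconj : (invDiag a)⁻¹ * E₁₂ 1 * invDiag a = E₁₂ 1 ^ q := by
    rw [invDiag_inv_mul_transvection_mul, transvection_pow, ha, nsmul_eq_mul]
  have hx : E₁₂ x = E₁₂ 1 ^ x.val := by
    rw [transvection_pow, nsmul_one, ZMod.natCast_zmod_val]
  rw [hx]
  exact pow_mem_pow_of_conj_eq_pow h1 hu hd hd' hconj (x.val_lt.trans_le hn)

theorem mem_pow_of_coe_eq_two {n : ℕ} [NeZero n] {B : Set SL(2, ZMod n)} {a : (ZMod n)ˣ}
    (ha : (a : ZMod n) = 2) (h1 : 1 ∈ B) (hu : E₁₂ 1 ∈ B) (hd : invDiag a ∈ B)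
    (hd' : (invDiag a)⁻¹ ∈ B) (hw : weyl ∈ B) (hw' : weyl⁻¹ ∈ B) (g : SL(2, ZMod n)) :
    g ∈ B ^ (20 * (Nat.log 4 n + 1) + 4) := by
  have hsq : (a : ZMod n) ^ 2 = (4 : ℕ) := by rw [ha]; norm_num
  have hn : n ≤ 4 ^ (Nat.log 4 n + 1) := (Nat.lt_pow_succ_log_self (by norm_num) n).le
  convert mem_pow_of_transvection_mem_pow hw hw' (transvection_mem_pow hsq hn h1 hu hd hd') g
    using 2
  ring

theorem SL2_short_words_general :
    ∃ C : ℝ, ∀ n : ℕ, Odd n → ∀ j : ZMod n, IsUnit j →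
      ∃ U H2 H T : SL(2, ZMod n),
        (U : Matrix (Fin 2) (Fin 2) (ZMod n)) = !![1, 1; 0, 1] ∧
        (H2 : Matrix (Fin 2) (Fin 2) (ZMod n)) = !![2⁻¹, 0; 0, 2] ∧
        (H : Matrix (Fin 2) (Fin 2) (ZMod n)) = !![j⁻¹, 0; 0, j] ∧
        (T : Matrix (Fin 2) (Fin 2) (ZMod n)) = !![0, 1; -1, 0] ∧
        ∀ g : SL(2, ZMod n), ∃ l : List SL(2, ZMod n),
          (∀ x ∈ l, x ∈ ({U, U⁻¹, H2, H2⁻¹, H, H⁻¹, T, T⁻¹} : Set SL(2, ZMod n))) ∧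
          l.prod = g ∧ (l.length : ℝ) ≤ C * (1 + Real.logb 2 n) := by
  refine ⟨24, fun n hn j ⟨b, hb⟩ ↦ ?_⟩
  have : NeZero n := ⟨hn.pos.ne'⟩
  obtain ⟨a, ha⟩ : IsUnit (2 : ZMod n) :=
    mod_cast (ZMod.isUnit_iff_coprime 2 n).mpr hn.coprime_two_left
  refine ⟨E₁₂ 1, invDiag a, invDiag b, weyl, coe_transvection_zero_one 1,
    by simp [coe_invDiag, ← ha, ZMod.inv_coe_unit], by simp [coe_invDiag, ← hb, ZMod.inv_coe_unit],
    coe_weyl, fun g ↦ ?_⟩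
  let S : Set SL(2, ZMod n) := {E₁₂ 1, (E₁₂ 1)⁻¹, invDiag a, (invDiag a)⁻¹, invDiag b,
    (invDiag b)⁻¹, weyl, weyl⁻¹}
  have hg : g ∈ insert 1 S ^ (20 * (Nat.log 4 n + 1) + 4) := by
    apply mem_pow_of_coe_eq_two ha <;> simp [S]
  obtain ⟨l, hlS, hlg, hlen⟩ := exists_list_of_mem_insert_one_pow hg
  refine ⟨l, hlS, hlg, ?_⟩
  have hlog : (Nat.log 4 n : ℝ) ≤ Real.logb 2 n :=
    (Nat.cast_le.mpr (Nat.log_anti_left (by norm_num) (by norm_num))).trans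
      (Real.natLog_le_logb n 2)
  have : (0 : ℝ) ≤ Nat.log 4 n := Nat.cast_nonneg _
  have hlen' : (l.length : ℝ) ≤ 20 * (Nat.log 4 n + 1) + 4 := mod_cast hlen
  linarith

end SpecialLinearGroup

/-- There is a constant `C` such that for every prime `p > 3` and generator `j` of
`(ℤ/p)ˣ`, every element of `SL(2, 𝔽_p)` is a product of at most `C·(1 + log₂ p)` factors,
each being one of `u = [[1,1],[0,1]]`, `h₂ = [[2⁻¹,0],[0,2]]`, `h = [[j⁻¹,0],[0,j]]`,
`t = [[0,1],[-1,0]]` or an inverse of one of these. -/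
theorem SL2_short_words :
    ∃ C : ℝ, ∀ (p : ℕ), p.Prime → 3 < p →
      ∀ (j : ℕ), 1 ≤ j → j ≤ p - 1 →
        (∀ x : (ZMod p)ˣ, ∃ k : ℕ, (x : ZMod p) = (j : ZMod p) ^ k) →
        ∃ U H2 H T : Matrix.SpecialLinearGroup (Fin 2) (ZMod p),
          (U : Matrix (Fin 2) (Fin 2) (ZMod p)) = !![1, 1; 0, 1] ∧
          (H2 : Matrix (Fin 2) (Fin 2) (ZMod p)) = !![(2 : ZMod p)⁻¹, 0; 0, 2] ∧
          (H : Matrix (Fin 2) (Fin 2) (ZMod p)) =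
            !![((j : ZMod p))⁻¹, 0; 0, (j : ZMod p)] ∧
          (T : Matrix (Fin 2) (Fin 2) (ZMod p)) = !![0, 1; -1, 0] ∧
          ∀ g : Matrix.SpecialLinearGroup (Fin 2) (ZMod p),
            ∃ l : List (Matrix.SpecialLinearGroup (Fin 2) (ZMod p)),
              (∀ x ∈ l, x ∈ ({U, U⁻¹, H2, H2⁻¹, H, H⁻¹, T, T⁻¹} :
                Set (Matrix.SpecialLinearGroup (Fin 2) (ZMod p)))) ∧
              l.prod = g ∧
              (l.length : ℝ) ≤ C * (1 + Real.logb 2 p) := by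
  exact SL2_short_words_general.imp fun _ hC p hp _ j _ _ _ ↦ hC p (hp.odd_of_ne_two (by omega)) j
    ((ZMod.isUnit_iff_coprime j p).mpr (Nat.coprime_of_lt_prime (by omega) (by omega) hp).symm)
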